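/- arXiv:2405.14961 — 3 statements merged into one kernel-verified Lean document; each statement's English description precedes it below -/
import Mathlib

section
/- One-step Gaussian propagation (core step of the forward-process property). Let a, b be real numbers with 0 < a ≤ b ≤ 1 and let x₀ ∈ ℝ. Then the measure obtained by first sampling y from gaussianReal (√b · x₀) (1 − b) and then sampling from gaussianReal (√(a/b) · y) (1 − a/b) — i.e. the bind (gaussianReal (√b·x₀) (1−b)).bind (fun y => gaussianReal (√(a/b)·y) (1 − a/b)) — equals gaussianReal (√a · x₀) (1 − a). -/
open MeasureTheory ProbabilityTheory

/-!
A normal variable with mean `c * y + d` and variance `w` is `c * y` plus an independent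
`N(d, w)` noise. Sampling `y` first and then this variable is therefore a convolution: rescale the
law of `y` by `c` and convolve it with the noise. Convolving Gaussians adds means and variances, and
`(a / b) * (1 - b) + (1 - a / b) = 1 - a`.
-/

lemma measurable_map_const_add {M : Type*} [Add M] [MeasurableSpace M] [MeasurableAdd₂ M]
    (ν : Measure M) [SFinite ν] : Measurable fun x : M ↦ ν.map (x + ·) := by
  have map_pair (x : M) : (ν.map (Prod.mk x)).map (fun p : M × M ↦ p.1 + p.2) = ν.map (x + ·) :=
    Measure.map_map measurable_add measurable_prodMk_left
  simpa only [Function.comp_def, map_pair] using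
    (Measure.measurable_map _ measurable_add).comp (Measurable.map_prodMk_left (ν := ν))

lemma bind_map_const_add_eq_map_conv {α M : Type*} [MeasurableSpace α] [AddMonoid M]
    [MeasurableSpace M] [MeasurableAdd₂ M] {μ : Measure α} {f : α → M} (hf : AEMeasurable f μ)
    (ν : Measure M) [SFinite ν] :
    μ.bind (fun a ↦ ν.map (f a + ·)) = (μ.map f).conv ν := by
  have kernel_aemeasurable : AEMeasurable (fun a ↦ ν.map (f a + ·)) μ :=
    (measurable_map_const_add ν).comp_aemeasurable hf
  refine Measure.ext_of_lintegral _ fun g hg ↦ ?_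
  calc ∫⁻ z, g z ∂μ.bind (fun a ↦ ν.map (f a + ·))
      = ∫⁻ a, ∫⁻ z, g z ∂ν.map (f a + ·) ∂μ :=
        Measure.lintegral_bind kernel_aemeasurable hg.aemeasurable
    _ = ∫⁻ a, ∫⁻ y, g (f a + y) ∂ν ∂μ :=
        lintegral_congr fun a ↦ lintegral_map hg (measurable_const_add (f a))
    _ = ∫⁻ x, ∫⁻ y, g (x + y) ∂ν ∂μ.map f :=
        (lintegral_map' (hg.comp measurable_add).lintegral_prod_right'.aemeasurable hf).symm
    _ = ∫⁻ z, g z ∂(μ.map f).conv ν := (Measure.lintegral_conv hg).symm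

lemma gaussianReal_bind_gaussianReal_const_mul_add (m c d : ℝ) (v w : NNReal) :
    (gaussianReal m v).bind (fun y ↦ gaussianReal (c * y + d) w)
      = gaussianReal (c * m + d) ((c ^ 2).toNNReal * v + w) := by
  calc (gaussianReal m v).bind (fun y ↦ gaussianReal (c * y + d) w)
      = (gaussianReal m v).bind (fun y ↦ (gaussianReal d w).map (c * y + ·)) := by
        simp only [gaussianReal_map_const_add, add_comm d]
    _ = ((gaussianReal m v).map (c * ·)).conv (gaussianReal d w) :=
        bind_map_const_add_eq_map_conv (by fun_prop) _
    _ = gaussianReal (c * m + d) ((c ^ 2).toNNReal * v + w) := by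
        rw [gaussianReal_map_const_mul, gaussianReal_conv_gaussianReal,
          Real.toNNReal_of_nonneg (sq_nonneg c)]

/-- One-step Gaussian propagation: sampling `y ~ N(√b·x₀, 1−b)` and then
`z ~ N(√(a/b)·y, 1−a/b)` gives `z ~ N(√a·x₀, 1−a)`. -/
theorem one_step_gaussian_propagation (a b x₀ : ℝ) (ha : 0 < a) (hab : a ≤ b) (hb1 : b ≤ 1) :
    (gaussianReal (Real.sqrt b * x₀) ((1 - b).toNNReal)).bind
      (fun y => gaussianReal (Real.sqrt (a / b) * y) ((1 - a / b).toNNReal))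
    = gaussianReal (Real.sqrt a * x₀) ((1 - a).toNNReal) := by
  have hb : 0 < b := ha.trans_le hab
  have ratio_nonneg : 0 ≤ a / b := (div_pos ha hb).le
  have ratio_le_one : a / b ≤ 1 := (div_le_one hb).2 hab
  have mean_eq : √(a / b) * (√b * x₀) = √a * x₀ := by
    rw [← mul_assoc, ← Real.sqrt_mul ratio_nonneg, div_mul_cancel₀ _ hb.ne']
  have variance_eq : (√(a / b) ^ 2).toNNReal * (1 - b).toNNReal + (1 - a / b).toNNReal
      = (1 - a).toNNReal := by
    rw [Real.sq_sqrt ratio_nonneg, ← Real.toNNReal_mul ratio_nonneg,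
      ← Real.toNNReal_add (mul_nonneg ratio_nonneg (sub_nonneg.2 hb1)) (sub_nonneg.2 ratio_le_one)]
    congr 1
    field_simp
    ring
  simpa only [add_zero, mean_eq, variance_eq] using gaussianReal_bind_gaussianReal_const_mul_add
    (√b * x₀) √(a / b) 0 (1 - b).toNNReal (1 - a / b).toNNReal
end

section
/- Marginal matching between student and teacher (Eq. (10) and the claim following Eq. (8) of the paper). Let α : ℕ → ℝ be an antitone sequence with α 0 = 1 and 0 < α t ≤ 1 for all t, let c ≥ 1 be a natural number, and let x₀ ∈ ℝ. Define the teacher marginals μ : ℕ → Measure ℝ by μ 0 = Dirac x₀ and μ s = (μ (s−1)).bind (fun x => gaussianReal (√(α s / α (s−1)) · x) (1 − α s / α (s−1))), and the student marginals ν : ℕ → Measure ℝ by ν 0 = Dirac x₀ and ν t = (ν (t−1)).bind (fun x => gaussianReal (√(α (c·t) / α (c·t − c)) · x) (1 − α (c·t) / α (c·t − c))). Then for every t, the student's t-step marginal equals the teacher's (c·t)-step marginal: ν t = μ (c·t). -/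
open MeasureTheory ProbabilityTheory

/-!
One step of the forward process sends `x` to `√r x + √(1 - r) ξ` with `ξ` standard Gaussian, and
two such steps with factors `r` and `s` amount to a single one with factor `s * r`. Along a chain
the factors `α (t + 1) / α t` telescope, so skipping from time `m` to time `n` is exactly one step
with factor `α n / α m`, and the student's steps are exactly these skips.
-/

theorem bind_map_const_add {X M : Type*} [MeasurableSpace X] [AddMonoid M] [MeasurableSpace M]
    [MeasurableAdd₂ M] (μ : Measure X) (ν : Measure M) [SFinite ν] {f : X → M}
    (hf : Measurable f) :
    μ.bind (fun x ↦ ν.map (f x + ·)) = μ.map f ∗ ν := by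
  have h_kernel : Measurable fun x ↦ ν.map (f x + ·) := by
    have h_translate : Measurable fun y : M ↦ (ν.map (Prod.mk y)).map fun p ↦ p.1 + p.2 :=
      (Measure.measurable_map _ measurable_add).comp Measurable.map_prodMk_left
    convert h_translate.comp hf using 2 with x
    exact (Measure.map_map measurable_add measurable_prodMk_left).symm
  refine Measure.ext_of_lintegral _ fun g hg ↦ ?_
  have h_inner : Measurable fun y ↦ ∫⁻ z, g (y + z) ∂ν :=
    (hg.comp measurable_add).lintegral_prod_right'
  calc ∫⁻ y, g y ∂μ.bind (fun x ↦ ν.map (f x + ·))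
      = ∫⁻ x, ∫⁻ z, g (f x + z) ∂ν ∂μ := by
        rw [Measure.lintegral_bind h_kernel.aemeasurable hg.aemeasurable]
        exact lintegral_congr fun x ↦ lintegral_map hg (measurable_const_add _)
    _ = ∫⁻ y, g y ∂(μ.map f ∗ ν) := by
        rw [Measure.lintegral_conv hg, lintegral_map h_inner hf]

theorem gaussianReal_bind_gaussianReal_const_mul (m a : ℝ) (v w : NNReal) :
    (gaussianReal m v).bind (fun x ↦ gaussianReal (a * x) w)
      = gaussianReal (a * m) (NNReal.mk (a ^ 2) (sq_nonneg a) * v + w) := by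
  have h_translate (x : ℝ) : gaussianReal (a * x) w = (gaussianReal 0 w).map (a * x + ·) := by
    rw [gaussianReal_map_const_add, zero_add]
  simp_rw [h_translate]
  rw [bind_map_const_add _ _ (measurable_const_mul a), gaussianReal_map_const_mul,
    gaussianReal_conv_gaussianReal, add_zero]

/-- The variance-preserving noising step with signal factor `r`, i.e. the Markov kernel
`x ↦ N(√r x, 1 - r)` of the diffusion's forward process. It has this meaning for `r ∈ [0, 1]`;
outside this interval the square root or the variance is truncated to `0`. -/
noncomputable def noisingKernel (r : ℝ) : Kernel ℝ ℝ where
  toFun x := gaussianReal (√r * x) (1 - r).toNNReal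
  measurable' := measurable_gaussianReal.comp (by fun_prop : Measurable fun x : ℝ ↦
    (√r * x, (1 - r).toNNReal))

theorem noisingKernel_apply (r x : ℝ) :
    noisingKernel r x = gaussianReal (√r * x) (1 - r).toNNReal := rfl

theorem noisingKernel_one : noisingKernel 1 = Kernel.id := by
  ext1 x
  simp [noisingKernel_apply, Kernel.id_apply]

theorem noisingKernel_comp_noisingKernel {r s : ℝ} (hr : r ≤ 1) (hs₀ : 0 ≤ s) (hs₁ : s ≤ 1) :
    noisingKernel s ∘ₖ noisingKernel r = noisingKernel (s * r) := by
  ext1 x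
  have h_mean : √s * (√r * x) = √(s * r) * x := by rw [Real.sqrt_mul hs₀, mul_assoc]
  have h_variance : NNReal.mk (√s ^ 2) (sq_nonneg _) * (1 - r).toNNReal + (1 - s).toNNReal
      = (1 - s * r).toNNReal := by
    have hsr : s * r ≤ 1 := (mul_le_of_le_one_right hs₀ hr).trans hs₁
    apply NNReal.coe_injective
    rw [NNReal.coe_add, NNReal.coe_mul, NNReal.coe_mk, Real.sq_sqrt hs₀,
      Real.coe_toNNReal _ (sub_nonneg.2 hr), Real.coe_toNNReal _ (sub_nonneg.2 hs₁),
      Real.coe_toNNReal _ (sub_nonneg.2 hsr)]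
    ring
  calc (noisingKernel s ∘ₖ noisingKernel r) x
      = (gaussianReal (√r * x) (1 - r).toNNReal).bind
          (fun y ↦ gaussianReal (√s * y) (1 - s).toNNReal) := Kernel.comp_apply _ _ _
    _ = noisingKernel (s * r) x := by
      rw [gaussianReal_bind_gaussianReal_const_mul, h_mean, h_variance, noisingKernel_apply]

/-- The measures `μ t` are the successive marginals of a forward process with cumulative signal
schedule `α` (the paper's `α` is cumulative: one step multiplies the signal factor by
`α (t + 1) / α t`). The initial law `μ 0` is left free. -/
def IsNoisingChain (α : ℕ → ℝ) (μ : ℕ → Measure ℝ) : Prop :=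
  ∀ t, μ (t + 1) = noisingKernel (α (t + 1) / α t) ∘ₘ μ t

theorem IsNoisingChain.eq_noisingKernel_comp {α : ℕ → ℝ} {μ : ℕ → Measure ℝ}
    (hμ : IsNoisingChain α μ) (hanti : Antitone α) (hpos : ∀ t, 0 < α t) {m n : ℕ}
    (hmn : m ≤ n) : μ n = noisingKernel (α n / α m) ∘ₘ μ m := by
  have ratio_le_one {i j : ℕ} (hij : i ≤ j) : α j / α i ≤ 1 := (div_le_one (hpos i)).2 (hanti hij)
  induction n, hmn using Nat.le_induction with
  | base => rw [div_self (hpos m).ne', noisingKernel_one, Measure.id_comp]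
  | succ n hmn ih =>
    rw [hμ n, ih, Measure.comp_assoc,
      noisingKernel_comp_noisingKernel (ratio_le_one hmn) (div_pos (hpos _) (hpos _)).le
        (ratio_le_one n.le_succ),
      div_mul_div_cancel₀ (hpos n).ne']

theorem student_matches_teacher_marginal_general {α : ℕ → ℝ} (hanti : Antitone α)
    (hpos : ∀ t, 0 < α t) {τ : ℕ → ℕ} (hτ : Monotone τ) {μ ν : ℕ → Measure ℝ}
    (hμ : IsNoisingChain α μ) (hν : IsNoisingChain (α ∘ τ) ν) (h_init : ν 0 = μ (τ 0)) (t : ℕ) :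
    ν t = μ (τ t) := by
  induction t with
  | zero => exact h_init
  | succ t ih =>
    rw [hν t, ih, hμ.eq_noisingKernel_comp hanti hpos (hτ t.le_succ)]
    rfl

/-- Marginal matching between student and teacher (Eq. (10)): the student's `t`-step marginal
equals the teacher's `(c·t)`-step marginal. -/
theorem student_matches_teacher_marginal (α : ℕ → ℝ) (hanti : Antitone α) (hα0 : α 0 = 1)
    (hpos : ∀ t, 0 < α t) (hle : ∀ t, α t ≤ 1) (c : ℕ) (hc : 1 ≤ c) (x₀ : ℝ)
    (μ : ℕ → Measure ℝ) (hμ0 : μ 0 = Measure.dirac x₀)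
    (hμ : ∀ s, 1 ≤ s → μ s = (μ (s - 1)).bind
      (fun x => gaussianReal (Real.sqrt (α s / α (s - 1)) * x) ((1 - α s / α (s - 1)).toNNReal)))
    (ν : ℕ → Measure ℝ) (hν0 : ν 0 = Measure.dirac x₀)
    (hν : ∀ t, 1 ≤ t → ν t = (ν (t - 1)).bind
      (fun x => gaussianReal (Real.sqrt (α (c * t) / α (c * t - c)) * x)
        ((1 - α (c * t) / α (c * t - c)).toNNReal))) :
    ∀ t, ν t = μ (c * t) := by
  have hν_chain : IsNoisingChain (α ∘ (c * ·)) ν := fun t ↦ by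
    have h_step := hν (t + 1) t.succ_pos
    rwa [Nat.add_sub_cancel, mul_add_one, Nat.add_sub_cancel] at h_step
  exact student_matches_teacher_marginal_general hanti hpos mul_right_mono
    (fun s ↦ hμ (s + 1) s.succ_pos) hν_chain (hν0.trans hμ0.symm)
end

section
/- Joint-law factorization of two consecutive student steps through the posterior. Let a, b be real numbers with 0 < a < b < 1 and x₀ ∈ ℝ. Set σ' = (1−b)(b−a)/((1−a)·b) and, for z ∈ ℝ, m z = ((1−b)·√a/((1−a)·√b))·z + ((b−a)/((1−a)·√b))·x₀. Then the following two measures on ℝ × ℝ are equal: (i) (gaussianReal (√b·x₀) (1−b)).bind (fun y => (gaussianReal (√(a/b)·y) (1 − a/b)).map (fun z => (y, z))), and (ii) (gaussianReal (√a·x₀) (1−a)).bind (fun z => (gaussianReal (m z) σ').map (fun y => (y, z))). -/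
open MeasureTheory ProbabilityTheory

/-!
Sampling `y ~ N(μ, v)` and then `z ~ N(c y + d, w)` produces a linear image of the product of
`N(μ, v)` with the noise law `N(d, w)`. The law of a linear image of Gaussians is determined by its
mean and covariance, so exchanging the order of sampling amounts to matching five polynomial
identities in the parameters; no densities, and hence no positivity of variances, are involved.
-/

open scoped NNReal

section SequentialSampling

variable {α β γ : Type*} [MeasurableSpace α] [MeasurableSpace β] [MeasurableSpace γ]

lemma map_prod_eq_bind_map (μ : Measure α) (ν : Measure β) [SFinite ν]
    {f : α × β → γ} (hf : Measurable f) :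
    (μ.prod ν).map f = μ.bind (fun x => ν.map (fun y => f (x, y))) := by
  have h_section (x : α) : ν.map (fun y => f (x, y)) = (ν.map (Prod.mk x)).map f :=
    (Measure.map_map hf measurable_prodMk_left).symm
  have h_kernel : Measurable (fun x => ν.map (fun y => f (x, y))) := by
    simp_rw [h_section]
    exact (Measure.measurable_map f hf).comp Measurable.map_prodMk_left
  ext s hs
  rw [Measure.map_apply hf hs, Measure.prod_apply (hf hs),
    Measure.bind_apply hs h_kernel.aemeasurable]
  exact lintegral_congr fun x => (Measure.map_apply (hf.comp measurable_prodMk_left) hs).symm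

lemma bind_gaussianReal_add_map_eq_map_prod (μ : Measure α) (n : ℝ) (w : ℝ≥0)
    {m : α → ℝ} (hm : Measurable m) {f : α × ℝ → γ} (hf : Measurable f) :
    μ.bind (fun x => (gaussianReal (m x + n) w).map (fun y => f (x, y)))
      = (μ.prod (gaussianReal n w)).map (fun p => f (p.1, m p.1 + p.2)) := by
  rw [map_prod_eq_bind_map _ _ (by fun_prop)]
  congr 1 with x : 1
  rw [add_comm, ← gaussianReal_map_const_add, Measure.map_map (by fun_prop) (by fun_prop)]
  rfl

end SequentialSampling

section GaussianProduct

lemma charFunDual_gaussianReal (m : ℝ) (v : ℝ≥0) (L : StrongDual ℝ ℝ) :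
    charFunDual (gaussianReal m v) L = Complex.exp (L m * Complex.I - v * L 1 ^ 2 / 2) := by
  rw [IsGaussian.charFunDual_eq, integral_complex_ofReal, integral_continuousLinearMap_gaussianReal,
    variance_continuousLinearMap_gaussianReal, Real.coe_toNNReal _ (sq_nonneg _)]
  push_cast
  rw [mul_comm (v : ℂ)]

lemma charFunDual_prod_gaussianReal (m n : ℝ) (v w : ℝ≥0) (L : StrongDual ℝ (ℝ × ℝ)) :
    charFunDual ((gaussianReal m v).prod (gaussianReal n w)) L
      = Complex.exp (L (m, n) * Complex.I
          - ((v * L (1, 0) ^ 2 + w * L (0, 1) ^ 2 : ℝ) : ℂ) / 2) := by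
  have h_split : L (m, n) = L (m, 0) + L (0, n) := by
    rw [← map_add, Prod.mk_add_mk, add_zero, zero_add]
  rw [charFunDual_prod, charFunDual_gaussianReal, charFunDual_gaussianReal, ← Complex.exp_add,
    h_split]
  simp only [ContinuousLinearMap.comp_apply, ContinuousLinearMap.inl_apply,
    ContinuousLinearMap.inr_apply]
  push_cast
  ring_nf

variable {E : Type*} [NormedAddCommGroup E] [NormedSpace ℝ E] [CompleteSpace E]
  [SecondCountableTopology E] [MeasurableSpace E] [BorelSpace E]

lemma map_prod_gaussianReal_eq_map_prod_gaussianReal {m n m' n' : ℝ} {v w v' w' : ℝ≥0}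
    {A B : ℝ × ℝ →L[ℝ] E} (h_mean : A (m, n) = B (m', n'))
    (h_var : ∀ L : StrongDual ℝ E, v * L (A (1, 0)) ^ 2 + w * L (A (0, 1)) ^ 2
      = v' * L (B (1, 0)) ^ 2 + w' * L (B (0, 1)) ^ 2) :
    ((gaussianReal m v).prod (gaussianReal n w)).map A
      = ((gaussianReal m' v').prod (gaussianReal n' w')).map B := by
  refine Measure.ext_of_charFunDual (funext fun L => ?_)
  simp only [charFunDual_map, charFunDual_prod_gaussianReal, ContinuousLinearMap.comp_apply,
    h_mean, h_var]

end GaussianProduct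

theorem bind_gaussianReal_affine_eq_bind_reverse {μ ν c d k e : ℝ} {v w v' w' : ℝ≥0}
    (h_mean_snd : ν = c * μ + d) (h_mean_fst : μ = k * ν + e)
    (h_var_snd : (v' : ℝ) = c ^ 2 * v + w) (h_var_fst : (v : ℝ) = k ^ 2 * v' + w')
    (h_cov : c * v = k * v') :
    (gaussianReal μ v).bind
        (fun y => (gaussianReal (c * y + d) w).map (fun z => (y, z)))
      = (gaussianReal ν v').bind
        (fun z => (gaussianReal (k * z + e) w').map (fun y => (y, z))) := by
  let fst := ContinuousLinearMap.fst ℝ ℝ ℝ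
  let snd := ContinuousLinearMap.snd ℝ ℝ ℝ
  let forward : ℝ × ℝ →L[ℝ] ℝ × ℝ := fst.prod (c • fst + snd)
  let backward : ℝ × ℝ →L[ℝ] ℝ × ℝ := (k • fst + snd).prod fst
  have h_forward := bind_gaussianReal_add_map_eq_map_prod (gaussianReal μ v) d w
    (m := (c * ·)) (by fun_prop) measurable_id
  have h_backward := bind_gaussianReal_add_map_eq_map_prod (gaussianReal ν v') e w'
    (m := (k * ·)) (by fun_prop) measurable_swap
  have h_linear : ((gaussianReal μ v).prod (gaussianReal d w)).map forward
      = ((gaussianReal ν v').prod (gaussianReal e w')).map backward := by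
    refine map_prod_gaussianReal_eq_map_prod_gaussianReal ?_ fun L => ?_
    · exact Prod.ext h_mean_fst h_mean_snd.symm
    · have h_coord (x y : ℝ) : L (x, y) = x * L (1, 0) + y * L (0, 1) := by
        rw [← smul_eq_mul, ← smul_eq_mul, ← map_smul, ← map_smul, ← map_add]
        simp
      have h_forward_fst : forward (1, 0) = (1, c) := by simp [forward, fst, snd]
      have h_forward_snd : forward (0, 1) = (0, 1) := by simp [forward, fst, snd]
      have h_backward_fst : backward (1, 0) = (k, 1) := by simp [backward, fst, snd]
      have h_backward_snd : backward (0, 1) = (1, 0) := by simp [backward, fst, snd]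
      rw [h_forward_fst, h_forward_snd, h_backward_fst, h_backward_snd, h_coord 1 c, h_coord k 1]
      linear_combination L (1, 0) ^ 2 * h_var_fst - L (0, 1) ^ 2 * h_var_snd
        + 2 * L (1, 0) * L (0, 1) * h_cov
  exact h_forward.trans (h_linear.trans h_backward.symm)

section Posterior

/-- The regression coefficient `(1 - b) √a / ((1 - a) √b)` of the posterior mean `m z` of `x'_{t-1}`
on the observed value `z` of `x'_t`, where `a = α_{ct}` and `b = α_{ct-c}`. -/
noncomputable def posteriorGain (a b : ℝ) : ℝ := (1 - b) * √a / ((1 - a) * √b)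

/-- The variance `σ'` of the posterior law of `x'_{t-1}` given `x'_t`, where `a = α_{ct}` and
`b = α_{ct-c}`. -/
noncomputable def posteriorVariance (a b : ℝ) : ℝ := (1 - b) * (b - a) / ((1 - a) * b)

variable {a b : ℝ}

lemma posteriorVariance_nonneg (ha : a < 1) (hab : a ≤ b) (hb₀ : 0 ≤ b) (hb₁ : b ≤ 1) :
    0 ≤ posteriorVariance a b :=
  div_nonneg (mul_nonneg (sub_nonneg.2 hb₁) (sub_nonneg.2 hab))
    (mul_nonneg (sub_nonneg.2 ha.le) hb₀)

lemma sqrt_mul_eq_posteriorGain_mul_add (ha : 0 ≤ a) (ha₁ : a ≠ 1) (hb : 0 < b) (x : ℝ) :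
    √b * x = posteriorGain a b * (√a * x) + (b - a) / ((1 - a) * √b) * x := by
  have h_one_sub_a : 1 - a ≠ 0 := sub_ne_zero.2 ha₁.symm
  rw [posteriorGain]
  field_simp
  rw [Real.sq_sqrt ha, Real.sq_sqrt hb.le]
  ring

lemma one_sub_eq_sqrt_div_sq_mul_add (ha : 0 ≤ a) (hb : 0 < b) :
    1 - a = √(a / b) ^ 2 * (1 - b) + (1 - a / b) := by
  rw [Real.sq_sqrt (div_nonneg ha hb.le)]
  field_simp
  ring

lemma one_sub_eq_posteriorGain_sq_mul_add (ha : 0 ≤ a) (ha₁ : a ≠ 1) (hb : 0 < b) :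
    1 - b = posteriorGain a b ^ 2 * (1 - a) + posteriorVariance a b := by
  have h_one_sub_a : 1 - a ≠ 0 := sub_ne_zero.2 ha₁.symm
  rw [posteriorGain, posteriorVariance, div_pow, mul_pow, mul_pow, Real.sq_sqrt ha,
    Real.sq_sqrt hb.le]
  field_simp
  ring

lemma sqrt_div_mul_one_sub_eq_posteriorGain_mul (ha : 0 ≤ a) (ha₁ : a ≠ 1) :
    √(a / b) * (1 - b) = posteriorGain a b * (1 - a) := by
  have h_one_sub_a : 1 - a ≠ 0 := sub_ne_zero.2 ha₁.symm
  rw [posteriorGain, Real.sqrt_div ha]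
  field_simp

end Posterior

/-- Joint-law factorization of two consecutive student steps through the posterior:
sampling `y ~ N(√b·x₀, 1−b)` then `z ~ N(√(a/b)·y, 1−a/b)` gives the same joint law of
`(y, z)` as sampling `z ~ N(√a·x₀, 1−a)` then `y ~ N(m z, σ')`. -/
theorem student_joint_law_factorization (a b x₀ : ℝ) (ha : 0 < a) (hab : a < b) (hb : b < 1) :
    (gaussianReal (Real.sqrt b * x₀) ((1 - b).toNNReal)).bind
      (fun y => (gaussianReal (Real.sqrt (a / b) * y) ((1 - a / b).toNNReal)).map
        (fun z => (y, z)))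
    = (gaussianReal (Real.sqrt a * x₀) ((1 - a).toNNReal)).bind
      (fun z => (gaussianReal
          (((1 - b) * Real.sqrt a / ((1 - a) * Real.sqrt b)) * z
            + ((b - a) / ((1 - a) * Real.sqrt b)) * x₀)
          (((1 - b) * (b - a) / ((1 - a) * b)).toNNReal)).map
        (fun y => (y, z))) := by
  have hb₀ : 0 < b := ha.trans hab
  have ha₁ : a < 1 := hab.trans hb
  have h_marginal_mean : √a * x₀ = √(a / b) * (√b * x₀) + 0 := by
    rw [Real.sqrt_div ha.le]
    field_simp
    ring
  have h_prior_var : ((1 - b).toNNReal : ℝ) = 1 - b := Real.coe_toNNReal _ (by linarith)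
  have h_marginal_var : ((1 - a).toNNReal : ℝ) = 1 - a := Real.coe_toNNReal _ (by linarith)
  have h_step_var : ((1 - a / b).toNNReal : ℝ) = 1 - a / b :=
    Real.coe_toNNReal _ (sub_nonneg.2 ((div_le_one hb₀).2 hab.le))
  have h_posterior_var : ((posteriorVariance a b).toNNReal : ℝ) = posteriorVariance a b :=
    Real.coe_toNNReal _ (posteriorVariance_nonneg ha₁ hab.le hb₀.le hb.le)
  simpa only [add_zero, posteriorGain, posteriorVariance] using
    bind_gaussianReal_affine_eq_bind_reverse (w' := (posteriorVariance a b).toNNReal)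
      h_marginal_mean
      (sqrt_mul_eq_posteriorGain_mul_add ha.le ha₁.ne hb₀ x₀)
      (by rw [h_prior_var, h_marginal_var, h_step_var, ← one_sub_eq_sqrt_div_sq_mul_add ha.le hb₀])
      (by rw [h_prior_var, h_marginal_var, h_posterior_var,
        ← one_sub_eq_posteriorGain_sq_mul_add ha.le ha₁.ne hb₀])
      (by rw [h_prior_var, h_marginal_var, sqrt_div_mul_one_sub_eq_posteriorGain_mul ha.le ha₁.ne])
end
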